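/- Let ς, k, r, w be real numbers with ς > 0, k > 0 and 1 + k > ς, with w ≠ 0 a constant disturbance. Let p, v, a : ℝ → ℝ be differentiable functions satisfying p' = v, v' = a, a'(t) = ( −a(t) + k·( r − (p(t) + v(t) + a(t)) ) )/ς + w for all t ≥ 0. Then (p(t), v(t), a(t)) → (r + ς·w/k, 0, 0) as t → ∞; in particular the tracking error e = r − (p + v + a) converges to the nonzero value −ς·w/k, so the static (memory-less) policy fails to reject a constant disturbance. -/

import Mathlib

open Filter Topology

/-!
Around the equilibrium `(r + ς w / k, 0, 0)` the closed loop is the linear system with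
characteristic polynomial `X ^ 3 + ((1 + k) / ς) X ^ 2 + (k / ς) X + k / ς`, which is Hurwitz by the
cubic Routh–Hurwitz conditions. A linear system `x' = A x` annihilated by a Hurwitz polynomial is a
cascade of first-order equations: if `(A - λ) q(A) = 0`, then `y = (A - λ) x` is again a solution,
now annihilated by `q(A)`, and `x' = λ x + y`. So `y → 0` by induction on the degree, and a stable
first-order equation with vanishing forcing has a vanishing solution.
-/

open Polynomial Matrix Asymptotics

section FirstOrder

theorem isLittleO_of_hasDerivAt_isLittleO {E : Type*} [NormedAddCommGroup E] [NormedSpace ℝ E]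
    {f f' : ℝ → E} {g g' : ℝ → ℝ} (hf : ∀ᶠ t in atTop, HasDerivAt f (f' t) t)
    (hg : ∀ᶠ t in atTop, HasDerivAt g (g' t) t) (hg' : ∀ᶠ t in atTop, 0 ≤ g' t)
    (hg_top : Tendsto g atTop atTop) (hfg : f' =o[atTop] g') : f =o[atTop] g := by
  refine isLittleO_iff.2 fun c hc => ?_
  obtain ⟨T, hT⟩ := eventually_atTop.1
    (hf.and <| hg.and <| hg'.and <| isLittleO_iff.1 hfg (half_pos hc))
  simp only [imp_and, forall_and] at hT
  obtain ⟨hfT, hgT, hg'_nonneg, hf'_le⟩ := hT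
  have hgrowth : ∀ t, T ≤ t → ‖f t‖ ≤ ‖f T‖ + c / 2 * (g t - g T) := fun t ht => by
    have hg_fence : ∀ s, T ≤ s →
        HasDerivAt (fun s => ‖f T‖ + c / 2 * (g s - g T)) (c / 2 * g' s) s := fun s hs =>
      (((hgT s hs).sub_const (g T)).const_mul (c / 2)).const_add ‖f T‖
    refine image_norm_le_of_norm_deriv_right_le_deriv_boundary' (a := T) (b := t)
      (fun s hs => (hfT s hs.1).continuousAt.continuousWithinAt)
      (fun s hs => (hfT s hs.1).hasDerivWithinAt) (by simp)
      (fun s hs => (hg_fence s hs.1).continuousAt.continuousWithinAt)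
      (fun s hs => (hg_fence s hs.1).hasDerivWithinAt) (fun s hs => ?_) ⟨ht, le_rfl⟩
    simpa only [Real.norm_of_nonneg (hg'_nonneg s hs.1)] using hf'_le s hs.1
  have hconst : ∀ᶠ t in atTop, ‖f T‖ - c / 2 * g T ≤ c / 2 * g t :=
    (hg_top.const_mul_atTop (half_pos hc)).eventually_ge_atTop _
  filter_upwards [eventually_ge_atTop T, hconst] with t ht hct
  calc ‖f t‖ ≤ c * g t := by linarith [hgrowth t ht]
    _ ≤ c * ‖g t‖ := mul_le_mul_of_nonneg_left (Real.le_norm_self _) hc.le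

variable {E : Type*} [NormedAddCommGroup E] [NormedSpace ℂ E]

theorem tendsto_zero_of_hasDerivAt_smul_add {l : ℂ} (hl : l.re < 0) {x f : ℝ → E}
    (hx : ∀ᶠ t in atTop, HasDerivAt x (l • x t + f t) t) (hf : Tendsto f atTop (𝓝 0)) :
    Tendsto x atTop (𝓝 0) := by
  have hexp : ∀ t : ℝ,
      HasDerivAt (fun t : ℝ => Complex.exp (-l * t)) (-l * Complex.exp (-l * t)) t := fun t => by
    simpa [mul_comm] using ((hasDerivAt_id t).ofReal_comp.const_mul (-l)).cexp
  have hnorm : ∀ t : ℝ, ‖Complex.exp (-l * t)‖ = Real.exp (-l.re * t) := fun t => by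
    simp [Complex.norm_exp]
  have hrate : 0 < -l.re := neg_pos.2 hl
  have hderiv : ∀ᶠ t : ℝ in atTop, HasDerivAt (fun t : ℝ => Complex.exp (-l * t) • x t)
      (Complex.exp (-l * t) • f t) t := by
    filter_upwards [hx] with t ht
    refine ((hexp t).smul ht).congr_deriv ?_
    module
  have hforcing : (fun t : ℝ => Complex.exp (-l * t) • f t) =o[atTop]
      fun t => Real.exp (-l.re * t) := by
    have hexp_bound : (fun t : ℝ => Complex.exp (-l * t)) =O[atTop] fun t => Real.exp (-l.re * t) :=
      .of_norm_eventuallyLE (.of_forall fun t => (hnorm t).le)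
    simpa using hexp_bound.smul_isLittleO ((isLittleO_one_iff ℝ).2 hf)
  have hlittle : (fun t : ℝ => Complex.exp (-l * t) • x t) =o[atTop]
      fun t => Real.exp (-l.re * t) := by
    refine isLittleO_of_hasDerivAt_isLittleO hderiv
      (g' := fun t => -l.re * Real.exp (-l.re * t)) (.of_forall fun t => ?_)
      (.of_forall fun t => by positivity)
      (Real.tendsto_exp_atTop.comp (tendsto_id.const_mul_atTop hrate))
      (hforcing.trans_isBigO (isBigO_self_const_mul hrate.ne' _ _))
    simpa [mul_comm] using ((hasDerivAt_id t).const_mul (-l.re)).exp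
  refine tendsto_zero_iff_norm_tendsto_zero.2 (hlittle.norm_left.tendsto_div_nhds_zero.congr ?_)
  intro t
  rw [norm_smul, hnorm, mul_div_cancel_left₀ _ (Real.exp_pos _).ne']

end FirstOrder

/-- Hurwitz polynomials: all complex roots lie in the open left half-plane, so that the linear
systems they annihilate are asymptotically stable. The coefficients may lie in any `R` over which
`ℂ` is an algebra, to cover both real characteristic polynomials and complex annihilating
polynomials. The zero polynomial is not Hurwitz. -/
def IsHurwitz {R : Type*} [CommSemiring R] [Algebra R ℂ] (p : R[X]) : Prop :=
  ∀ z : ℂ, aeval z p = 0 → z.re < 0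

namespace IsHurwitz

variable {R : Type*} [CommSemiring R] [Algebra R ℂ]

theorem ne_zero {p : R[X]} (hp : IsHurwitz p) : p ≠ 0 := by
  rintro rfl
  exact lt_irrefl _ (hp 0 (map_zero _))

theorem map_algebraMap {p : R[X]} (hp : IsHurwitz p) :
    IsHurwitz (p.map (algebraMap R ℂ)) := fun z hz =>
  hp z (by rwa [aeval_map_algebraMap] at hz)

theorem cubic_of_lt_mul {a b c : ℝ} (ha : 0 < a) (hc : 0 < c) (habc : c < a * b) :
    IsHurwitz (X ^ 3 + C a * X ^ 2 + C b * X + C c) := by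
  rintro ⟨x, y⟩ hz
  have hb : 0 < b := pos_of_mul_pos_right (hc.trans habc) ha.le
  obtain ⟨hre, him⟩ : x ^ 3 - 3 * x * y ^ 2 + a * (x ^ 2 - y ^ 2) + b * x + c = 0 ∧
      y * (3 * x ^ 2 + 2 * a * x + b - y ^ 2) = 0 := by
    simp only [map_add, map_mul, aeval_X, aeval_C, Complex.coe_algebraMap, pow_succ,
      pow_zero, one_mul, Complex.ext_iff, Complex.add_re, Complex.add_im, Complex.mul_re,
      Complex.mul_im, Complex.ofReal_re, Complex.ofReal_im, Complex.zero_re, Complex.zero_im] at hz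
    constructor <;> linarith
  refine lt_of_not_ge fun (hx : 0 ≤ x) => ?_
  rcases mul_eq_zero.1 him with rfl | hy
  · have : 0 < x ^ 3 + a * x ^ 2 + b * x + c := by positivity
    linarith
  · -- Eliminating `y ^ 2` leaves the cubic whose constant term is the Hurwitz determinant.
    have hsum : 8 * x ^ 3 + 8 * a * x ^ 2 + 2 * (a ^ 2 + b) * x + (a * b - c) = 0 := by
      linear_combination (3 * x + a) * hy - hre
    have : 0 < 8 * x ^ 3 + 8 * a * x ^ 2 + 2 * (a ^ 2 + b) * x + (a * b - c) := by
      have := sub_pos.2 habc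
      positivity
    linarith

end IsHurwitz

section LinearSystem

variable {E : Type*} [NormedAddCommGroup E] [NormedSpace ℂ E]

theorem tendsto_zero_of_aeval_prod_X_sub_C_eq_zero {A : E →L[ℂ] E} (s : Multiset ℂ)
    (hs : ∀ l ∈ s, l.re < 0) {x : ℝ → E} (hx : ∀ᶠ t in atTop, HasDerivAt x (A (x t)) t)
    (hsx : ∀ᶠ t in atTop, aeval A (s.map fun l => X - C l).prod (x t) = 0) :
    Tendsto x atTop (𝓝 0) := by
  induction s using Multiset.induction_on generalizing x with
  | empty =>
    exact tendsto_const_nhds.congr' (hsx.mono fun t ht => by simpa using ht.symm)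
  | cons l s ih =>
    rw [Multiset.forall_mem_cons] at hs
    let y : ℝ → E := fun t => A (x t) - l • x t
    have hy : ∀ᶠ t in atTop, HasDerivAt y (A (y t)) t := by
      filter_upwards [hx] with t ht
      have hAx : HasDerivAt (fun t => A (x t)) (A (A (x t))) t :=
        (A.restrictScalars ℝ).hasFDerivAt.comp_hasDerivAt t ht
      exact (hAx.sub (ht.const_smul l)).congr_deriv (by simp only [y, map_sub, map_smul])
    have hsy : ∀ᶠ t in atTop, aeval A (s.map fun l => X - C l).prod (y t) = 0 := by
      filter_upwards [hsx] with t ht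
      simpa [mul_comm (X - C l), Algebra.algebraMap_eq_smul_one, y] using ht
    refine tendsto_zero_of_hasDerivAt_smul_add hs.1 ?_ (ih hs.2 hy hsy)
    simpa only [y, add_sub_cancel] using hx

theorem IsHurwitz.tendsto_zero_of_aeval_eq_zero {p : ℂ[X]} (hp : IsHurwitz p) {A : E →L[ℂ] E}
    (hpA : aeval A p = 0) {x : ℝ → E} (hx : ∀ᶠ t in atTop, HasDerivAt x (A (x t)) t) :
    Tendsto x atTop (𝓝 0) := by
  have hroots : aeval A (p.roots.map fun l => X - C l).prod = 0 := by
    rw [(IsAlgClosed.splits p).eq_prod_roots, ← smul_eq_C_mul, map_smul] at hpA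
    exact (smul_eq_zero.1 hpA).resolve_left (leadingCoeff_ne_zero.2 hp.ne_zero)
  refine tendsto_zero_of_aeval_prod_X_sub_C_eq_zero p.roots (fun l hl => hp l ?_) hx
    (.of_forall fun t => by simp [hroots])
  simpa using isRoot_of_mem_roots hl

theorem IsHurwitz.tendsto_zero_of_hasDerivAt_mulVec {n : Type*} [Fintype n] [DecidableEq n]
    {M : Matrix n n ℝ} (hM : IsHurwitz M.charpoly) {x : ℝ → n → ℝ}
    (hx : ∀ᶠ t in atTop, HasDerivAt x (M *ᵥ x t) t) : Tendsto x atTop (𝓝 0) := by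
  let N : Matrix n n ℂ := M.map (algebraMap ℝ ℂ)
  let e : Matrix n n ℂ ≃ₐ[ℂ] ((n → ℂ) →L[ℂ] (n → ℂ)) :=
    toLinAlgEquiv'.trans (Module.End.toContinuousLinearMap (n → ℂ))
  have hN : aeval (e N) (M.charpoly.map (algebraMap ℝ ℂ)) = 0 := by
    rw [aeval_algHom_apply, ← charpoly_map, aeval_self_charpoly, map_zero]
  have hz : ∀ᶠ t in atTop, HasDerivAt (fun t i => (x t i : ℂ)) (e N fun i => (x t i : ℂ)) t := by
    filter_upwards [hx] with t ht
    refine hasDerivAt_pi.2 fun i => ((hasDerivAt_pi.1 ht i).ofReal_comp).congr_deriv ?_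
    exact RingHom.map_mulVec (algebraMap ℝ ℂ) M (x t) i
  have hlim := hM.map_algebraMap.tendsto_zero_of_aeval_eq_zero hN hz
  refine tendsto_pi_nhds.2 fun i => ?_
  exact (Complex.continuous_re.tendsto 0).comp (tendsto_pi_nhds.1 hlim i)

end LinearSystem

section ThirdOrder

theorem charpoly_companion_fin_three {R : Type*} [CommRing R] (a b c : R) :
    (!![0, 1, 0; 0, 0, 1; -c, -b, -a] : Matrix (Fin 3) (Fin 3) R).charpoly =
      X ^ 3 + C a * X ^ 2 + C b * X + C c := by
  calc
    _ = X * X * (X + C a) + X * C b + C c := by simp [Matrix.charpoly, det_fin_three]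
    _ = _ := by ring

theorem tendsto_zero_of_third_order {α β γ : ℝ} (hα : 0 < α) (hγ : 0 < γ) (h : γ < α * β)
    {x v a : ℝ → ℝ} (hx : ∀ᶠ t in atTop, HasDerivAt x (v t) t)
    (hv : ∀ᶠ t in atTop, HasDerivAt v (a t) t)
    (ha : ∀ᶠ t in atTop, HasDerivAt a (-γ * x t - β * v t - α * a t) t) :
    Tendsto x atTop (𝓝 0) ∧ Tendsto v atTop (𝓝 0) ∧ Tendsto a atTop (𝓝 0) := by
  have hM : IsHurwitz (!![0, 1, 0; 0, 0, 1; -γ, -β, -α] : Matrix (Fin 3) (Fin 3) ℝ).charpoly := by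
    rw [charpoly_companion_fin_three]
    exact .cubic_of_lt_mul hα hγ h
  have hstate : ∀ᶠ t in atTop, HasDerivAt (fun t => ![x t, v t, a t])
      (!![0, 1, 0; 0, 0, 1; -γ, -β, -α] *ᵥ ![x t, v t, a t]) t := by
    filter_upwards [hx, hv, ha] with t hxt hvt hat
    refine hasDerivAt_pi.2 fun i => ?_
    fin_cases i
    · simpa using hxt
    · simpa using hvt
    · exact hat.congr_deriv (by simp [mulVec, dotProduct, Fin.sum_univ_three, sub_eq_add_neg])
  have hlim := tendsto_pi_nhds.1 (hM.tendsto_zero_of_hasDerivAt_mulVec hstate)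
  exact ⟨hlim 0, hlim 1, hlim 2⟩

end ThirdOrder

/-- Static linear policy under a constant disturbance `w ≠ 0`: the closed loop
`p' = v`, `v' = a`, `a' = (-a + k (r - (p + v + a)))/ς + w` with `ς > 0`,
`k > 0`, `1 + k > ς` satisfies `(p, v, a) → (r + ς w / k, 0, 0)` as `t → ∞`;
in particular the tracking error `e = r - (p + v + a)` converges to the
nonzero value `-ς w / k`, so the static policy fails to reject the
disturbance. -/
theorem stmt_15 (ς k r w : ℝ) (hς : 0 < ς) (hk : 0 < k) (hkς : 1 + k > ς)
    (hw : w ≠ 0)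
    (p v a : ℝ → ℝ)
    (hp : Differentiable ℝ p) (hv : Differentiable ℝ v) (ha : Differentiable ℝ a)
    (hpv : ∀ t, 0 ≤ t → deriv p t = v t)
    (hva : ∀ t, 0 ≤ t → deriv v t = a t)
    (hcl : ∀ t, 0 ≤ t →
      deriv a t = (-a t + k * (r - (p t + v t + a t))) / ς + w) :
    Tendsto (fun t => (p t, v t, a t)) atTop (𝓝 (r + ς * w / k, 0, 0)) ∧
    Tendsto (fun t => r - (p t + v t + a t)) atTop (𝓝 (-(ς * w / k))) ∧
    -(ς * w / k) ≠ 0 := by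
  have hα : 1 < (1 + k) / ς := (one_lt_div hς).2 hkς
  have hγ : 0 < k / ς := div_pos hk hς
  have hx' : ∀ t, 0 ≤ t → HasDerivAt (fun t => p t - (r + ς * w / k)) (v t) t := fun t ht =>
    hpv t ht ▸ (hp t).hasDerivAt.sub_const _
  have hv' : ∀ t, 0 ≤ t → HasDerivAt v (a t) t := fun t ht => hva t ht ▸ (hv t).hasDerivAt
  have ha' : ∀ t, 0 ≤ t → HasDerivAt a (-(k / ς) * (p t - (r + ς * w / k)) - k / ς * v t -
      (1 + k) / ς * a t) t := fun t ht => by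
    refine (ha t).hasDerivAt.congr_deriv ((hcl t ht).trans ?_)
    field_simp
    ring
  obtain ⟨hx0, hv0, ha0⟩ := tendsto_zero_of_third_order (one_pos.trans hα) hγ
    (lt_mul_of_one_lt_left hγ hα) ((eventually_ge_atTop 0).mono hx')
    ((eventually_ge_atTop 0).mono hv') ((eventually_ge_atTop 0).mono ha')
  have hp0 : Tendsto p atTop (𝓝 (r + ς * w / k)) := tendsto_sub_nhds_zero_iff.1 hx0
  refine ⟨hp0.prodMk_nhds (hv0.prodMk_nhds ha0), ?_, ?_⟩
  · convert ((hp0.add hv0).add ha0).const_sub r using 2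
    ring
  · exact neg_ne_zero.2 (div_ne_zero (mul_ne_zero hς.ne' hw) hk.ne')
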